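/- The regular Hom-Lie structures on I(X,K) form a normal subgroup of the group of Lie algebra automorphisms of I(X,K): (i) the identity is a regular Hom-Lie structure; (ii) if φ and ψ are Lie automorphisms of I(X,K) that are regular Hom-Lie structures, then so is φ∘ψ; (iii) if φ is a Lie automorphism that is a regular Hom-Lie structure, then so is φ⁻¹; and (iv) if φ is a Lie automorphism that is a regular Hom-Lie structure and ψ is any Lie automorphism of I(X,K), then ψ∘φ∘ψ⁻¹ is a regular Hom-Lie structure. -/

import Mathlib

open IncidenceAlgebra

attribute [local instance 100] LieRing.ofAssociativeRing

/-- The Hom-Jacobi identity for a map `φ` on a Lie ring. -/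
def HomJacobi {A : Type*} [LieRing A] (φ : A → A) : Prop :=
  ∀ a b c : A, ⁅⁅a, b⁆, φ c⁆ + ⁅⁅b, c⁆, φ a⁆ + ⁅⁅c, a⁆, φ b⁆ = 0

/-- `φ` is a regular Hom-Lie structure: a Lie algebra automorphism satisfying Hom-Jacobi. -/
def IsRegHomLie (K : Type*) {A : Type*} [CommRing K] [LieRing A] [LieAlgebra K A]
    (φ : A → A) : Prop :=
  (∃ e : A ≃ₗ⁅K⁆ A, ⇑e = φ) ∧ HomJacobi φ

/-- The "matrix unit" `e_{xy}` of the incidence algebra, for `x ≤ y`. -/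
def eSingle (K : Type*) [Field K] {X : Type*} [PartialOrder X] [DecidableEq X]
    (x y : X) (_h : x ≤ y) : IncidenceAlgebra K X where
  toFun u v := if u = x ∧ v = y then 1 else 0
  eq_zero_of_not_le' u v huv := by
    split_ifs with h'
    · exact absurd (by rw [h'.1, h'.2]; exact _h) huv
    · rfl

/-- The multiplicative map `M_σ` on the incidence algebra: `(M_σ f)(x,y) = σ(x,y) f(x,y)`. -/
def Mmul (K : Type*) [Field K] {X : Type*} [PartialOrder X]
    (σ : X → X → K) (f : IncidenceAlgebra K X) : IncidenceAlgebra K X where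
  toFun u v := σ u v * f u v
  eq_zero_of_not_le' u v huv := by
    rw [apply_eq_zero_of_not_le huv f, mul_zero]

/-- The conjugation map `ξ_β : f ↦ β f β⁻¹`. -/
noncomputable def xiMap {K : Type*} [Field K] {X : Type*} [PartialOrder X] [DecidableEq X]
    [LocallyFiniteOrder X] (β : IncidenceAlgebra K X) :
    IncidenceAlgebra K X → IncidenceAlgebra K X :=
  fun f => β * f * Ring.inverse β

/-- `l(x,y)`: the maximal length of a chain from `x` to `y`. -/
noncomputable def chainLen {X : Type*} [PartialOrder X] (x y : X) : ℕ :=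
  sSup {n : ℕ | ∃ c : Fin (n + 1) → X, StrictMono c ∧ c 0 = x ∧ c (Fin.last n) = y}

/-- `J^m`: the `K`-span of the `e_{xy}` with `x < y` and `l(x,y) ≥ m`. -/
noncomputable def Jpow (K : Type*) [Field K] {X : Type*} [PartialOrder X] [DecidableEq X]
    (m : ℕ) : Submodule K (IncidenceAlgebra K X) :=
  Submodule.span K {f | ∃ x y, ∃ h : x < y, m ≤ chainLen x y ∧ f = eSingle K x y h.le}

/-!
An injective Lie endomorphism `φ` of an incidence algebra `L` satisfies the Hom-Jacobi identity if
and only if every `φ c - c` centralizes `⁅L, L⁆`. The second condition is stable under composition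
and inversion, while conjugation by an automorphism preserves the Hom-Jacobi identity in any Lie
algebra. For the equivalence, the Hom-Jacobi identity is linear in `φ` and holds for the identity
map, hence holds for `δ = φ - id`. Applied to triples containing diagonal idempotents, it
reduces the claim to `δ(e_z)` and then `δ(e_{xy})` commuting with the strictly upper triangular
matrix units; that `φ` preserves brackets and is injective pins down the entries of `φ(e_z)`.
-/

/-- `φ` acts as the identity modulo the centralizer of the derived algebra; for an injective
Lie endomorphism of an incidence algebra this is the Hom-Jacobi identity in a form stable under
composition and inversion. -/
def IsIdModDerivedCentralizer {L : Type*} [LieRing L] (φ : L → L) : Prop :=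
  ∀ a b c : L, ⁅⁅a, b⁆, φ c - c⁆ = 0

lemma eq_and_eq_of_lt_of_mem_pair {X : Type*} [Preorder X] {p q u v : X} (hpq : p < q)
    (huv : u < v) (hu : u = p ∨ u = q) (hv : v = p ∨ v = q) : u = p ∧ v = q := by
  rcases hu with rfl | rfl <;> rcases hv with rfl | rfl
  · exact absurd huv (lt_irrefl _)
  · exact ⟨rfl, rfl⟩
  · exact absurd huv hpq.asymm
  · exact absurd huv (lt_irrefl _)

section LieRing

variable {L : Type*} [LieRing L]

lemma HomJacobi.id : HomJacobi (id : L → L) := fun a b c => by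
  have h := lie_jacobi c a b
  rw [← lie_skew c ⁅a, b⁆, ← lie_skew a ⁅b, c⁆, ← lie_skew b ⁅c, a⁆, ← neg_add, ← neg_add,
    neg_eq_zero] at h
  exact h

lemma HomJacobi.sub {φ ψ : L → L} (hφ : HomJacobi φ) (hψ : HomJacobi ψ) :
    HomJacobi fun a => φ a - ψ a := fun a b c => by
  have h := congrArg₂ (· - ·) (hφ a b c) (hψ a b c)
  simp only [sub_zero] at h
  rw [← h, lie_sub, lie_sub, lie_sub]
  abel

lemma HomJacobi.conj {K : Type*} [CommRing K] {M : Type*} [LieRing M] [LieAlgebra K L]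
    [LieAlgebra K M] {φ : L → L} (hφ : HomJacobi φ) (ψ : L ≃ₗ⁅K⁆ M) :
    HomJacobi (ψ ∘ φ ∘ ψ.symm) := fun a b c => by
  simpa only [LieEquiv.map_lie, map_add, map_zero, LieEquiv.apply_symm_apply,
    Function.comp_apply] using
    congrArg ψ (hφ (ψ.symm a) (ψ.symm b) (ψ.symm c))

namespace IsIdModDerivedCentralizer

variable {φ ψ : L → L}

lemma homJacobi (hφ : IsIdModDerivedCentralizer φ) : HomJacobi φ := fun a b c => by
  have hlie : ∀ a b c : L, ⁅⁅a, b⁆, φ c⁆ = ⁅⁅a, b⁆, c⁆ := fun a b c => by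
    rw [← sub_eq_zero, ← lie_sub, hφ]
  rw [hlie, hlie, hlie]
  exact HomJacobi.id a b c

lemma comp (hφ : IsIdModDerivedCentralizer φ) (hψ : IsIdModDerivedCentralizer ψ) :
    IsIdModDerivedCentralizer (φ ∘ ψ) := fun a b c => by
  rw [Function.comp_apply, ← sub_add_sub_cancel (φ (ψ c)) (ψ c) c, lie_add, hφ, hψ, add_zero]

lemma of_rightInverse (hφ : IsIdModDerivedCentralizer φ) (h : Function.RightInverse ψ φ) :
    IsIdModDerivedCentralizer ψ := fun a b c => by
  have hc := hφ a b (ψ c)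
  rw [h c] at hc
  rw [← neg_sub, lie_neg, hc, neg_zero]

end IsIdModDerivedCentralizer

end LieRing

section MatrixUnit

/-- The matrix unit `e_{xy}` over an arbitrary coefficient ring (`eSingle` requires a field);
`matrixUnit R (le_refl x)` is the idempotent `e_x` of the vertex `x`. -/
def matrixUnit (R : Type*) [Zero R] [One R] {X : Type*} [LE X] [DecidableEq X] {x y : X}
    (h : x ≤ y) : IncidenceAlgebra R X where
  toFun u v := if u = x ∧ v = y then 1 else 0
  eq_zero_of_not_le' _ _ huv := if_neg fun ⟨hu, hv⟩ => huv (hu ▸ hv ▸ h)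

lemma matrixUnit_apply {R : Type*} [Zero R] [One R] {X : Type*} [LE X] [DecidableEq X] {x y : X}
    (h : x ≤ y) (u v : X) :
    matrixUnit R h u v = if u = x ∧ v = y then 1 else 0 := rfl

section Mul

variable {R : Type*} [NonAssocSemiring R] {X : Type*} [Preorder X] [LocallyFiniteOrder X]
  [DecidableEq X] {x y : X}

lemma matrixUnit_mul_apply (h : x ≤ y) (g : IncidenceAlgebra R X) (p q : X) :
    (matrixUnit R h * g) p q = if p = x then g y q else 0 := by
  simp only [mul_apply, matrixUnit_apply, ite_and, ite_mul, one_mul, zero_mul]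
  split_ifs with hp
  · subst hp
    rw [Finset.sum_ite_eq', ite_eq_left_iff, Finset.mem_Icc, not_and]
    exact fun hq => (apply_eq_zero_of_not_le (hq h) g).symm
  · exact Finset.sum_const_zero

lemma mul_matrixUnit_apply (h : x ≤ y) (g : IncidenceAlgebra R X) (p q : X) :
    (g * matrixUnit R h) p q = if q = y then g p x else 0 := by
  simp only [mul_apply, matrixUnit_apply, and_comm, ite_and, mul_ite, mul_one, mul_zero]
  split_ifs with hq
  · subst hq
    rw [Finset.sum_ite_eq', ite_eq_left_iff, Finset.mem_Icc, and_comm, not_and]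
    exact fun hp => (apply_eq_zero_of_not_le (hp h) g).symm
  · exact Finset.sum_const_zero

end Mul

section Lie

variable {R : Type*} [Ring R] {X : Type*} [Preorder X] [LocallyFiniteOrder X]
  [DecidableEq X] {x y z : X}

lemma matrixUnit_lie_apply (h : x ≤ y) (g : IncidenceAlgebra R X) (p q : X) :
    ⁅matrixUnit R h, g⁆ p q = (if p = x then g y q else 0) - if q = y then g p x else 0 := by
  rw [Ring.lie_def, IncidenceAlgebra.sub_apply, matrixUnit_mul_apply, mul_matrixUnit_apply]

lemma lie_matrixUnit_left (h : x < y) :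
    ⁅matrixUnit R (le_refl x), matrixUnit R h.le⁆ = matrixUnit R h.le := by
  ext p q
  rw [matrixUnit_lie_apply]
  simp only [matrixUnit_apply, h.ne, and_false, if_false, ite_self, sub_zero, true_and, ite_and]

lemma lie_matrixUnit_right (h : x < y) :
    ⁅matrixUnit R (le_refl y), matrixUnit R h.le⁆ = -matrixUnit R h.le := by
  ext p q
  rw [matrixUnit_lie_apply, IncidenceAlgebra.neg_apply]
  simp [matrixUnit_apply, h.ne', ← ite_and, and_comm]

lemma lie_matrixUnit_of_ne (h : x ≤ y) (hx : z ≠ x) (hy : z ≠ y) :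
    ⁅matrixUnit R (le_refl z), matrixUnit R h⁆ = 0 := by
  ext p q
  rw [matrixUnit_lie_apply, IncidenceAlgebra.zero_apply]
  simp [matrixUnit_apply, hx, hy]

lemma matrixUnit_lie_left (h : x < y) :
    ⁅matrixUnit R h.le, matrixUnit R (le_refl x)⁆ = -matrixUnit R h.le := by
  rw [← lie_skew, lie_matrixUnit_left h]

lemma matrixUnit_lie_right (h : x < y) :
    ⁅matrixUnit R h.le, matrixUnit R (le_refl y)⁆ = matrixUnit R h.le := by
  rw [← lie_skew, lie_matrixUnit_right h, neg_neg]

lemma matrixUnit_lie_of_ne (h : x ≤ y) (hx : z ≠ x) (hy : z ≠ y) :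
    ⁅matrixUnit R h, matrixUnit R (le_refl z)⁆ = 0 := by
  rw [← lie_skew, lie_matrixUnit_of_ne h hx hy, neg_zero]

lemma lie_matrixUnit_vertex (z w : X) :
    ⁅matrixUnit R (le_refl z), matrixUnit R (le_refl w)⁆ = 0 := by
  rcases eq_or_ne z w with rfl | hzw
  · exact lie_self _
  · exact lie_matrixUnit_of_ne _ hzw hzw

end Lie

lemma matrixUnit_lie_eq_zero_iff {R : Type*} [Ring R] {X : Type*} [PartialOrder X]
    [LocallyFiniteOrder X] [DecidableEq X] {x y : X} (h : x < y) (g : IncidenceAlgebra R X) :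
    ⁅matrixUnit R h.le, g⁆ = 0 ↔
      g x x = g y y ∧ (∀ t, y < t → g y t = 0) ∧ ∀ t, t < x → g t x = 0 := by
  constructor
  · intro hg
    have hentry : ∀ p q, (if p = x then g y q else 0) - (if q = y then g p x else 0) = 0 := by
      intro p q
      rw [← matrixUnit_lie_apply h.le, hg, IncidenceAlgebra.zero_apply]
    refine ⟨?_, fun t ht => ?_, fun t ht => ?_⟩
    · exact (sub_eq_zero.1 (by simpa using hentry x y)).symm
    · simpa [ht.ne'] using hentry x t
    · simpa [ht.ne] using hentry t y
  · rintro ⟨hdiag, habove, hbelow⟩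
    ext p q
    rw [matrixUnit_lie_apply, IncidenceAlgebra.zero_apply]
    have hrow : q ≠ y → g y q = 0 := fun hq => by
      by_cases hyq : y ≤ q
      · exact habove q (hyq.lt_of_ne' hq)
      · exact apply_eq_zero_of_not_le hyq g
    have hcol : p ≠ x → g p x = 0 := fun hp => by
      by_cases hpx : p ≤ x
      · exact hbelow p (hpx.lt_of_ne hp)
      · exact apply_eq_zero_of_not_le hpx g
    grind

end MatrixUnit

section IncidenceLie

variable {K : Type*} [CommRing K] {X : Type*} [PartialOrder X] [LocallyFiniteOrder X]
  [DecidableEq X] {x y : X}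

lemma lie_apply_self (f g : IncidenceAlgebra K X) (x : X) : ⁅f, g⁆ x x = 0 := by
  simp [Ring.lie_def, IncidenceAlgebra.sub_apply, mul_comm]

lemma lie_apply_of_eq_zero_between {f : IncidenceAlgebra K X} (h : x < y)
    (hrow : ∀ z, x < z → z < y → f x z = 0) (hcol : ∀ z, x < z → z < y → f z y = 0)
    (g : IncidenceAlgebra K X) :
    ⁅f, g⁆ x y = (f x x - f y y) * g x y - f x y * (g x x - g y y) := by
  have hsum : ∀ F : X → K, (∀ z, x < z → z < y → F z = 0) →
      ∑ z ∈ Finset.Icc x y, F z = F x + F y := fun F hF => by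
    rw [← Finset.sum_pair h.ne]
    refine (Finset.sum_subset (by simp [Finset.insert_subset_iff, h.le]) fun z hz hne => ?_).symm
    simp only [Finset.mem_Icc, Finset.mem_insert, Finset.mem_singleton, not_or] at hz hne
    exact hF z (hz.1.lt_of_ne' hne.1) (hz.2.lt_of_ne hne.2)
  rw [Ring.lie_def, IncidenceAlgebra.sub_apply, mul_apply, mul_apply,
    hsum _ fun z hxz hzy => by rw [hrow z hxz hzy, zero_mul],
    hsum _ fun z hxz hzy => by rw [hcol z hxz hzy, mul_zero]]
  ring

lemma lie_lie_eq_zero_of_forall_matrixUnit {h : IncidenceAlgebra K X}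
    (hh : ∀ (x y : X) (hxy : x < y), ⁅matrixUnit K hxy.le, h⁆ = 0) (a b : IncidenceAlgebra K X) :
    ⁅⁅a, b⁆, h⁆ = 0 := by
  have hentries := fun x y (hxy : x < y) => (matrixUnit_lie_eq_zero_iff hxy h).1 (hh x y hxy)
  rw [← lie_skew, neg_eq_zero]
  ext x y hle
  rw [IncidenceAlgebra.zero_apply]
  rcases hle.eq_or_lt with rfl | hxy
  · exact lie_apply_self ..
  · rw [lie_apply_of_eq_zero_between hxy (fun z hxz hzy => (hentries z y hzy).2.2 x hxz)
        (fun z hxz hzy => (hentries x z hxz).2.1 y hzy),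
      (hentries x y hxy).1, lie_apply_self, lie_apply_self]
    ring

/- At a minimal interval `[p, q]` other than `[u, v]` where `g` does not vanish, an endpoint `z` of
`[u, v]` outside `{p, q}` gives `±g p q = ⁅_, g⁆ p q = 0`. -/
lemma apply_eq_zero_of_lie_eq {s t g : IncidenceAlgebra K X} {u v : X} (huv : u < v)
    (hs : ∀ p q, p < q → u ≠ p → u ≠ q → s p p = s q q)
    (ht : ∀ p q, p < q → v ≠ p → v ≠ q → t p p = t q q)
    (hsg : ⁅s, g⁆ = g) (htg : ⁅t, g⁆ = -g) {p q : X} (hpq : p < q)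
    (hg : p ≤ u → v ≤ q → g u v = 0) : g p q = 0 := by
  have hdiag : ∀ x, g x x = 0 := fun x => by rw [← hsg, lie_apply_self]
  induction hn : (Finset.Icc p q).card using Nat.strong_induction_on generalizing p q with
  | _ n ih =>
  subst hn
  have hlie : ∀ r : IncidenceAlgebra K X, r p p = r q q → ⁅r, g⁆ p q = 0 := fun r hr => by
    rw [← lie_skew, IncidenceAlgebra.neg_apply, lie_apply_of_eq_zero_between hpq
      (fun z hpz hzq => ih _ (Finset.card_lt_card (Finset.Icc_ssubset_Icc_right hpq.le le_rfl hzq))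
        hpz (fun hpu hvz => hg hpu (hvz.trans hzq.le)) rfl)
      (fun z hpz hzq => ih _ (Finset.card_lt_card (Finset.Icc_ssubset_Icc_left hpq.le hpz le_rfl))
        hzq (fun hzu hvq => hg (hpz.le.trans hzu) hvq) rfl), hdiag, hdiag, hr]
    ring
  by_cases hu : u = p ∨ u = q
  · by_cases hv : v = p ∨ v = q
    · obtain ⟨rfl, rfl⟩ := eq_and_eq_of_lt_of_mem_pair hpq huv hu hv
      exact hg le_rfl le_rfl
    · rw [not_or] at hv
      have h := hlie t (ht p q hpq hv.1 hv.2)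
      rwa [htg, IncidenceAlgebra.neg_apply, neg_eq_zero] at h
  · rw [not_or] at hu
    rw [← hsg]
    exact hlie s (hs p q hpq hu.1 hu.2)

/- `g` vanishes at all proper subintervals of `[u, v]`, so `⁅s, g⁆ = g` kills the `(u, v)` entry of
`(s u u - s v v - 1) • g`, and hence all its entries. -/
lemma sub_sub_one_smul_eq_zero_of_lie_eq {s t g : IncidenceAlgebra K X} {u v : X} (huv : u < v)
    (hs : ∀ p q, p < q → u ≠ p → u ≠ q → s p p = s q q)
    (ht : ∀ p q, p < q → v ≠ p → v ≠ q → t p p = t q q)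
    (hsg : ⁅s, g⁆ = g) (htg : ⁅t, g⁆ = -g) : (s u u - s v v - 1) • g = 0 := by
  have hdiag : ∀ x, g x x = 0 := fun x => by rw [← hsg, lie_apply_self]
  have hcorner : (s u u - s v v - 1) * g u v = 0 := by
    have hgs : ⁅g, s⁆ u v = -g u v := by
      rw [← lie_skew, hsg, IncidenceAlgebra.neg_apply]
    rw [lie_apply_of_eq_zero_between huv
      (fun z huz hzv => apply_eq_zero_of_lie_eq huv hs ht hsg htg huz
        fun _ hvz => absurd hzv hvz.not_gt)
      (fun z huz hzv => apply_eq_zero_of_lie_eq huv hs ht hsg htg hzv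
        fun hzu _ => absurd huz hzu.not_gt), hdiag, hdiag] at hgs
    linear_combination -hgs
  ext p q hle
  rcases hle.eq_or_lt with rfl | hpq
  · rw [constSMul_apply, hdiag, smul_zero, IncidenceAlgebra.zero_apply]
  · exact apply_eq_zero_of_lie_eq huv hs ht (by rw [lie_smul, hsg])
      (by rw [lie_smul, htg, smul_neg]) hpq fun _ _ => hcorner

end IncidenceLie

namespace HomJacobi

variable {K : Type*} [CommRing K] {X : Type*} [PartialOrder X] [LocallyFiniteOrder X]
  [DecidableEq X] {x y z : X}

section Map

variable {φ : IncidenceAlgebra K X → IncidenceAlgebra K X}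

lemma matrixUnit_lie_map_of_ne (hφ : HomJacobi φ) (h : x < y) (hx : z ≠ x) (hy : z ≠ y) :
    ⁅matrixUnit K h.le, φ (matrixUnit K (le_refl z))⁆ = 0 := by
  have hxz := hφ (matrixUnit K (le_refl x)) (matrixUnit K h.le) (matrixUnit K (le_refl z))
  rwa [lie_matrixUnit_left h, matrixUnit_lie_of_ne h.le hx hy, lie_matrixUnit_vertex, zero_lie,
    zero_lie, add_zero, add_zero] at hxz

lemma matrixUnit_lie_map_left_add_map_right (hφ : HomJacobi φ) (h : x < y) :
    ⁅matrixUnit K h.le, φ (matrixUnit K (le_refl x)) + φ (matrixUnit K (le_refl y))⁆ = 0 := by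
  have hxy := hφ (matrixUnit K (le_refl x)) (matrixUnit K (le_refl y)) (matrixUnit K h.le)
  rwa [lie_matrixUnit_vertex, lie_matrixUnit_right h, matrixUnit_lie_left h, zero_lie,
    zero_add, neg_lie, neg_lie, ← neg_add, neg_eq_zero, ← lie_add] at hxy

end Map

variable {φ : IncidenceAlgebra K X →ₗ⁅K⁆ IncidenceAlgebra K X}

lemma map_left_apply_sub_eq_one (hφ : HomJacobi φ) (hinj : Function.Injective φ) (h : x < y) :
    φ (matrixUnit K (le_refl x)) x x - φ (matrixUnit K (le_refl x)) y y = 1 := by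
  set c := φ (matrixUnit K (le_refl x)) x x - φ (matrixUnit K (le_refl x)) y y - 1 with hc
  have hdiag : ∀ z p q, p < q → z ≠ p → z ≠ q →
      φ (matrixUnit K (le_refl z)) p p = φ (matrixUnit K (le_refl z)) q q := fun z p q hpq hp hq =>
    ((matrixUnit_lie_eq_zero_iff hpq _).1 (hφ.matrixUnit_lie_map_of_ne hpq hp hq)).1
  have hmap : c • φ (matrixUnit K h.le) = 0 :=
    sub_sub_one_smul_eq_zero_of_lie_eq h (hdiag x) (hdiag y)
      (by rw [← LieHom.map_lie, lie_matrixUnit_left h])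
      (by rw [← LieHom.map_lie, lie_matrixUnit_right h, map_neg])
  have hunit : c • matrixUnit K h.le = 0 := hinj (by rw [map_smul, hmap, map_zero])
  have hentry := congrArg (fun f : IncidenceAlgebra K X => f x y) hunit
  simp only [constSMul_apply, matrixUnit_apply, and_self, if_true, smul_eq_mul, mul_one,
    IncidenceAlgebra.zero_apply] at hentry
  exact sub_eq_zero.1 (hc ▸ hentry)

lemma map_right_apply_sub_eq_one (hφ : HomJacobi φ) (hinj : Function.Injective φ) (h : x < y) :
    φ (matrixUnit K (le_refl y)) y y - φ (matrixUnit K (le_refl y)) x x = 1 := by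
  have hsum := ((matrixUnit_lie_eq_zero_iff h _).1
    (hφ.matrixUnit_lie_map_left_add_map_right h)).1
  rw [IncidenceAlgebra.add_apply, IncidenceAlgebra.add_apply] at hsum
  linear_combination hφ.map_left_apply_sub_eq_one hinj h - hsum

/- Evaluate `⁅φ(e_t), φ(e_x)⁆ = 0` at `(y, t)`, where `φ(e_t)` has no entries `(y, s)` or `(s, t)`
off the diagonal. -/
lemma map_left_apply_eq_zero_of_gt (hφ : HomJacobi φ) (hinj : Function.Injective φ) (h : x < y)
    {t : X} (ht : y < t) : φ (matrixUnit K (le_refl x)) y t = 0 := by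
  have hentry : ∀ s w, x < s → s < t → s < w → φ (matrixUnit K (le_refl t)) s w = 0 :=
    fun s w hxs hst hsw => ((matrixUnit_lie_eq_zero_iff hxs _).1
      (hφ.matrixUnit_lie_map_of_ne hxs (hxs.trans hst).ne' hst.ne')).2.1 w hsw
  have hcomm : ⁅φ (matrixUnit K (le_refl t)), φ (matrixUnit K (le_refl x))⁆ y t = 0 := by
    rw [← LieHom.map_lie, lie_matrixUnit_vertex, map_zero, IncidenceAlgebra.zero_apply]
  rw [lie_apply_of_eq_zero_between ht (fun s hys _ => hentry y s h ht hys)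
    (fun s hys hst => hentry s t (h.trans hys) hst hst), hentry y t h ht ht] at hcomm
  linear_combination -hcomm - φ (matrixUnit K (le_refl x)) y t *
    hφ.map_right_apply_sub_eq_one hinj ht

lemma map_left_apply_eq_zero_of_lt (hφ : HomJacobi φ) (hinj : Function.Injective φ) (h : x < y)
    {t : X} (ht : t < x) : φ (matrixUnit K (le_refl x)) t x = 0 := by
  have hentry : ∀ s w, s < y → t < s → w < s → φ (matrixUnit K (le_refl t)) w s = 0 :=
    fun s w hsy hts hws => ((matrixUnit_lie_eq_zero_iff hsy _).1
      (hφ.matrixUnit_lie_map_of_ne hsy hts.ne (hts.trans hsy).ne)).2.2 w hws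
  have hcomm : ⁅φ (matrixUnit K (le_refl t)), φ (matrixUnit K (le_refl x))⁆ t x = 0 := by
    rw [← LieHom.map_lie, lie_matrixUnit_vertex, map_zero, IncidenceAlgebra.zero_apply]
  rw [lie_apply_of_eq_zero_between ht (fun s hts hsx => hentry s t (hsx.trans h) hts hts)
    (fun s _ hsx => hentry x s h ht hsx), hentry x t h ht ht] at hcomm
  linear_combination hcomm - φ (matrixUnit K (le_refl x)) t x *
    hφ.map_left_apply_sub_eq_one hinj ht

lemma matrixUnit_lie_map_left_sub (hφ : HomJacobi φ) (hinj : Function.Injective φ) (h : x < y) :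
    ⁅matrixUnit K h.le, φ (matrixUnit K (le_refl x)) - matrixUnit K (le_refl x)⁆ = 0 := by
  refine (matrixUnit_lie_eq_zero_iff h _).2 ⟨?_, fun t ht => ?_, fun t ht => ?_⟩
  · simp only [IncidenceAlgebra.sub_apply, matrixUnit_apply, h.ne', and_self, if_true, if_false]
    linear_combination hφ.map_left_apply_sub_eq_one hinj h
  · simp [hφ.map_left_apply_eq_zero_of_gt hinj h ht, matrixUnit_apply, h.ne']
  · simp [hφ.map_left_apply_eq_zero_of_lt hinj h ht, matrixUnit_apply, ht.ne]

lemma matrixUnit_lie_map_vertex_sub (hφ : HomJacobi φ) (hinj : Function.Injective φ) (h : x < y)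
    (z : X) : ⁅matrixUnit K h.le, φ (matrixUnit K (le_refl z)) - matrixUnit K (le_refl z)⁆ = 0 := by
  rcases eq_or_ne z x with rfl | hx
  · exact hφ.matrixUnit_lie_map_left_sub hinj h
  rcases eq_or_ne z y with rfl | hy
  · have hsum := hφ.matrixUnit_lie_map_left_add_map_right h
    have hleft := hφ.matrixUnit_lie_map_left_sub hinj h
    rw [lie_sub, matrixUnit_lie_left h, sub_neg_eq_add] at hleft
    rw [lie_add] at hsum
    rw [lie_sub, matrixUnit_lie_right h, ← sub_eq_zero.2 (hsum.trans hleft.symm)]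
    abel
  · rw [lie_sub, hφ.matrixUnit_lie_map_of_ne h hx hy, matrixUnit_lie_of_ne h.le hx hy, sub_zero]

lemma lie_lie_map_vertex_sub (hφ : HomJacobi φ) (hinj : Function.Injective φ)
    (a b : IncidenceAlgebra K X) (z : X) :
    ⁅⁅a, b⁆, φ (matrixUnit K (le_refl z)) - matrixUnit K (le_refl z)⁆ = 0 :=
  lie_lie_eq_zero_of_forall_matrixUnit
    (fun _ _ h => hφ.matrixUnit_lie_map_vertex_sub hinj h z) a b

/- `φ(e_{xy})` has the same weights as `e_{xy}` under every `e_z`, so its entries in row `y` and in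
column `x` vanish. -/
lemma matrixUnit_lie_map_self (hφ : HomJacobi φ) (hinj : Function.Injective φ) (h : x < y) :
    ⁅matrixUnit K h.le, φ (matrixUnit K h.le)⁆ = 0 := by
  have hbracket : φ (matrixUnit K h.le) =
      ⁅φ (matrixUnit K (le_refl x)), φ (matrixUnit K h.le)⁆ := by
    rw [← LieHom.map_lie, lie_matrixUnit_left h]
  have hweight : ∀ z, ⁅matrixUnit K (le_refl z), φ (matrixUnit K h.le)⁆ =
      φ ⁅matrixUnit K (le_refl z), matrixUnit K h.le⁆ := fun z => by
    have hz := hφ.lie_lie_map_vertex_sub hinj (φ (matrixUnit K (le_refl x)))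
      (φ (matrixUnit K h.le)) z
    rw [← hbracket, lie_sub, sub_eq_zero] at hz
    rw [LieHom.map_lie, ← lie_skew, ← hz, lie_skew]
  have hentry : ∀ t, t ≠ x → t ≠ y → ∀ p q, (if p = t then φ (matrixUnit K h.le) t q else 0) -
      (if q = t then φ (matrixUnit K h.le) p t else 0) = 0 := fun t hx hy p q => by
    rw [← matrixUnit_lie_apply (le_refl t), hweight, lie_matrixUnit_of_ne h.le hx hy, map_zero,
      IncidenceAlgebra.zero_apply]
  refine (matrixUnit_lie_eq_zero_iff h _).2 ⟨?_, fun t ht => ?_, fun t ht => ?_⟩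
  · rw [hbracket, lie_apply_self, lie_apply_self]
  · simpa [ht.ne] using hentry t (h.trans ht).ne' ht.ne' y t
  · simpa [ht.ne'] using hentry t ht.ne (ht.trans h).ne t x

lemma matrixUnit_lie_map_matrixUnit_sub (hφ : HomJacobi φ) (hinj : Function.Injective φ)
    {p q : X} (h : x < y) (hpq : p < q) :
    ⁅matrixUnit K hpq.le, φ (matrixUnit K h.le) - matrixUnit K h.le⁆ = 0 := by
  have hδ : ∀ z, ⁅⁅matrixUnit K (le_refl z), matrixUnit K hpq.le⁆,
        φ (matrixUnit K h.le) - matrixUnit K h.le⁆ +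
      ⁅⁅matrixUnit K h.le, matrixUnit K (le_refl z)⁆,
        φ (matrixUnit K hpq.le) - matrixUnit K hpq.le⁆ = 0 := fun z => by
    have hz := hφ.sub HomJacobi.id (matrixUnit K (le_refl z)) (matrixUnit K hpq.le)
      (matrixUnit K h.le)
    simpa only [id_eq, hφ.lie_lie_map_vertex_sub hinj, add_zero] using hz
  have hcomm : ∀ z, z ≠ x → z ≠ y →
      ⁅⁅matrixUnit K (le_refl z), matrixUnit K hpq.le⁆,
        φ (matrixUnit K h.le) - matrixUnit K h.le⁆ = 0 := fun z hx hy => by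
    have hz := hδ z
    rwa [matrixUnit_lie_of_ne h.le hx hy, zero_lie, add_zero] at hz
  by_cases hp : p = x ∨ p = y
  · by_cases hq : q = x ∨ q = y
    · obtain ⟨rfl, rfl⟩ := eq_and_eq_of_lt_of_mem_pair h hpq hp hq
      rw [lie_sub, lie_self, sub_zero, hφ.matrixUnit_lie_map_self hinj h]
    · rw [not_or] at hq
      have h0 := hcomm q hq.1 hq.2
      rwa [lie_matrixUnit_right hpq, neg_lie, neg_eq_zero] at h0
  · rw [not_or] at hp
    have h0 := hcomm p hp.1 hp.2
    rwa [lie_matrixUnit_left hpq] at h0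

lemma isIdModDerivedCentralizer (hφ : HomJacobi φ) (hinj : Function.Injective φ) :
    IsIdModDerivedCentralizer φ := fun a b c => by
  refine lie_lie_eq_zero_of_forall_matrixUnit (fun x y h => ?_) a b
  have hderived : ∀ a b : IncidenceAlgebra K X,
      ⁅⁅a, b⁆, φ (matrixUnit K h.le) - matrixUnit K h.le⁆ = 0 :=
    lie_lie_eq_zero_of_forall_matrixUnit fun _ _ =>
      hφ.matrixUnit_lie_map_matrixUnit_sub hinj h
  have hδ := hφ.sub HomJacobi.id (matrixUnit K (le_refl x)) (matrixUnit K h.le) c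
  simpa only [id_eq, lie_matrixUnit_left h, hφ.lie_lie_map_vertex_sub hinj, hderived,
    add_zero] using hδ

end HomJacobi

theorem stmt13_general {K : Type*} [CommRing K] {X : Type*} [PartialOrder X] [DecidableEq X]
    [LocallyFiniteOrder X] :
    IsRegHomLie K (id : IncidenceAlgebra K X → IncidenceAlgebra K X) ∧
    (∀ φ ψ : IncidenceAlgebra K X ≃ₗ⁅K⁆ IncidenceAlgebra K X,
      HomJacobi ⇑φ → HomJacobi ⇑ψ → IsRegHomLie K (⇑φ ∘ ⇑ψ)) ∧
    (∀ φ : IncidenceAlgebra K X ≃ₗ⁅K⁆ IncidenceAlgebra K X,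
      HomJacobi ⇑φ → IsRegHomLie K ⇑φ.symm) ∧
    (∀ φ ψ : IncidenceAlgebra K X ≃ₗ⁅K⁆ IncidenceAlgebra K X,
      HomJacobi ⇑φ → IsRegHomLie K (⇑ψ ∘ ⇑φ ∘ ⇑ψ.symm)) := by
  have hid : ∀ φ : IncidenceAlgebra K X ≃ₗ⁅K⁆ IncidenceAlgebra K X, HomJacobi φ →
      IsIdModDerivedCentralizer φ := fun φ hφ =>
    HomJacobi.isIdModDerivedCentralizer (φ := φ.toLieHom) hφ φ.injective
  refine ⟨⟨⟨LieEquiv.refl, rfl⟩, HomJacobi.id⟩, fun φ ψ hφ hψ => ?_, fun φ hφ => ?_,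
    fun φ ψ hφ => ?_⟩
  · exact ⟨⟨ψ.trans φ, rfl⟩, ((hid φ hφ).comp (hid ψ hψ)).homJacobi⟩
  · exact ⟨⟨φ.symm, rfl⟩, ((hid φ hφ).of_rightInverse φ.apply_symm_apply).homJacobi⟩
  · exact ⟨⟨(ψ.symm.trans φ).trans ψ, rfl⟩, hφ.conj ψ⟩

theorem stmt13 {K : Type*} [Field K] {X : Type*} [PartialOrder X] [Fintype X] [DecidableEq X]
    [LocallyFiniteOrder X]
    (hcard : 1 < Fintype.card X)
    (hconn : ∀ x y : X, Relation.ReflTransGen (fun a b : X => a ≤ b ∨ b ≤ a) x y) :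
    IsRegHomLie K (id : IncidenceAlgebra K X → IncidenceAlgebra K X) ∧
    (∀ φ ψ : IncidenceAlgebra K X ≃ₗ⁅K⁆ IncidenceAlgebra K X,
      HomJacobi ⇑φ → HomJacobi ⇑ψ → IsRegHomLie K (⇑φ ∘ ⇑ψ)) ∧
    (∀ φ : IncidenceAlgebra K X ≃ₗ⁅K⁆ IncidenceAlgebra K X,
      HomJacobi ⇑φ → IsRegHomLie K ⇑φ.symm) ∧
    (∀ φ ψ : IncidenceAlgebra K X ≃ₗ⁅K⁆ IncidenceAlgebra K X,
      HomJacobi ⇑φ → IsRegHomLie K (⇑ψ ∘ ⇑φ ∘ ⇑ψ.symm)) :=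
  stmt13_general
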